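/- Let d ≥ 2 and let V := ∫_{S^d} ∫_{S^d} |x − y| dσ_d(x) dσ_d(y). Suppose there is a constant c > 0 such that the maximal sum of distances satisfies E_{−1}(S^d; N) := sup { ∑_{j≠k} |x_j − x_k| : x_1,…,x_N ∈ S^d } = V·N² − c·N^{1−1/d} + o(N^{1−1/d}) as N → ∞. Then the optimal spherical cap L2-discrepancy satisfies N^{1/2 + 1/(2d)} · D_{L2,C}(S^d; N) → sqrt( c · H_d(B^d)/H_d(S^d) ) as N → ∞. -/

import Mathlib

open MeasureTheory Metric Real Filter
open scoped BigOperators ENNReal NNReal RealInnerProductSpace Topology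

noncomputable section

/-- Normalized uniform (surface) probability measure `σ_d` on the unit sphere
`S^d ⊂ ℝ^{d+1}`, defined as normalized `d`-dimensional Hausdorff measure. -/
def sigmaMeasure (d : ℕ) : Measure (EuclideanSpace ℝ (Fin (d + 1))) :=
  (μH[(d : ℝ)] (sphere (0 : EuclideanSpace ℝ (Fin (d + 1))) 1))⁻¹ •
    μH[(d : ℝ)].restrict (sphere (0 : EuclideanSpace ℝ (Fin (d + 1))) 1)

/-- Squared spherical cap `L²` discrepancy of the `N`-point configuration `x` on `S^d`:
`∫_{-1}^{1} ∫_{S^d} |#{k : x_k ∈ C(y;t)}/N − σ_d(C(y;t))|² dσ_d(y) dt`. -/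
def L2DiscSq (d N : ℕ) (x : Fin N → EuclideanSpace ℝ (Fin (d + 1))) : ℝ :=
  ∫ t in Set.Icc (-1 : ℝ) 1, ∫ y,
    ((Nat.card {k : Fin N // t ≤ ⟪y, x k⟫} : ℝ) / N
      - (sigmaMeasure d {z | t ≤ ⟪y, z⟫}).toReal) ^ 2 ∂ sigmaMeasure d

/-- Spherical cap `L²` discrepancy. -/
def L2Disc (d N : ℕ) (x : Fin N → EuclideanSpace ℝ (Fin (d + 1))) : ℝ :=
  Real.sqrt (L2DiscSq d N x)

/-- Optimal (infimal) spherical cap `L²`-discrepancy over all `N`-point configurations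
on `S^d`. -/
def optL2Disc (d N : ℕ) : ℝ :=
  ⨅ x : {x : Fin N → EuclideanSpace ℝ (Fin (d + 1)) //
    ∀ k, x k ∈ sphere (0 : EuclideanSpace ℝ (Fin (d + 1))) 1}, L2Disc d N x.1

/-- The maximal sum of distances `E_{−1}(S^d; N) = sup { ∑_{j≠k} |x_j − x_k| }` over all
`N`-point configurations on `S^d`. -/
def maxSumDist (d N : ℕ) : ℝ :=
  ⨆ x : {x : Fin N → EuclideanSpace ℝ (Fin (d + 1)) //
    ∀ k, x k ∈ sphere (0 : EuclideanSpace ℝ (Fin (d + 1))) 1},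
    ∑ j, ∑ k, if j ≠ k then dist (x.1 j) (x.1 k) else 0

/-!
Stolarsky's invariance principle: the `σ`-mass of the intersection of two caps of the same height,
averaged over heights and centres, is `∫ y, (1 + min ⟪y, v⟫ ⟪y, w⟫) ∂σ = 1 - κ * dist v w`, where
`2 * κ` is the mean of `|⟪y, e⟫|` over the sphere for any unit vector `e`. Expanding the square, the
squared discrepancy of `N` points is `κ` times the gap between the mean distance on the sphere and
the mean distance of the points, so minimizing discrepancy means maximizing the sum of distances.

It remains to see that `κ = H_d(B^d) / H_d(S^d)`. Integrating `|⟪y, x⟫| * exp (-‖x‖ ^ 2)` over `y`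
on the sphere and `x` in space, in both orders, gives `κ = vol(B^d) / ((d + 1) * vol(B^{d+1}))`.
The Hausdorff measures are compared with these volumes without fixing their normalization: by
Fubini, the mean volume of the sector of the ball over a cap equals the mean mass of a cap. A cap of
height `c` projects to `ℝ^d` with Lipschitz distortion tending to `1` as `c → 1`, and its sector is
squeezed between right circular cones.
-/

section AxialCoordinates

variable {E F : Type*} [NormedAddCommGroup E] [InnerProductSpace ℝ E]
  [NormedAddCommGroup F] [InnerProductSpace ℝ F] {e : E}

theorem exists_linearIsometryEquiv_fst_eq_inner [FiniteDimensional ℝ E] {d : ℕ}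
    (hE : Module.finrank ℝ E = d + 1) (he : ‖e‖ = 1) :
    ∃ L : E ≃ₗᵢ[ℝ] WithLp 2 (ℝ × EuclideanSpace ℝ (Fin d)), ∀ x, (L x).fst = ⟪e, x⟫ := by
  have hW : Module.finrank ℝ (WithLp 2 (ℝ × EuclideanSpace ℝ (Fin d))) = d + 1 := by
    rw [(WithLp.linearEquiv 2 ℝ (ℝ × EuclideanSpace ℝ (Fin d))).finrank_eq, Module.finrank_prod,
      Module.finrank_self, finrank_euclideanSpace_fin, add_comm]
  let L₀ : E ≃ₗᵢ[ℝ] WithLp 2 (ℝ × EuclideanSpace ℝ (Fin d)) :=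
    (stdOrthonormalBasis ℝ E).equiv (stdOrthonormalBasis ℝ _) (finCongr (hE.trans hW.symm))
  let e₀ : WithLp 2 (ℝ × EuclideanSpace ℝ (Fin d)) := WithLp.toLp 2 (1, 0)
  have he₀ : ‖L₀ e‖ = ‖e₀‖ := by
    rw [L₀.norm_map, he, WithLp.prod_norm_eq_of_L2]
    simp [e₀]
  let L := L₀.trans (Submodule.reflection (ℝ ∙ (L₀ e - e₀))ᗮ)
  refine ⟨L, fun x => ?_⟩
  have hLe : L e = e₀ := Submodule.reflection_sub he₀
  rw [← L.inner_map_map e x, hLe, WithLp.prod_inner_apply]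
  simp [e₀]

variable {L : E ≃ₗᵢ[ℝ] WithLp 2 (ℝ × F)}

theorem norm_sq_eq_inner_sq_add_norm_snd_sq (hL : ∀ x, (L x).fst = ⟪e, x⟫) (x : E) :
    ‖x‖ ^ 2 = ⟪e, x⟫ ^ 2 + ‖(L x).snd‖ ^ 2 := by
  rw [← L.norm_map, WithLp.prod_norm_sq_eq_of_L2, hL, Real.norm_eq_abs, sq_abs]

theorem lipschitzWith_snd (L : E ≃ₗᵢ[ℝ] WithLp 2 (ℝ × F)) :
    LipschitzWith 1 fun x => (L x).snd := by
  refine LipschitzWith.mk_one fun x y => ?_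
  rw [← L.dist_map x y, dist_eq_norm, dist_eq_norm, ← WithLp.sub_snd]
  exact WithLp.norm_snd_le _ _

theorem measurePreserving_inner_snd [FiniteDimensional ℝ E] [FiniteDimensional ℝ F]
    [MeasurableSpace E] [BorelSpace E] [MeasurableSpace F] [BorelSpace F]
    (hL : ∀ x, (L x).fst = ⟪e, x⟫) : MeasurePreserving fun x => (⟪e, x⟫, (L x).snd) := by
  have h := (WithLp.volume_preserving_ofLp ℝ F).comp L.measurePreserving
  convert h using 2 with x
  exact (hL x).symm ▸ rfl

end AxialCoordinates

/-- The cap of the unit sphere with centre `e` and height `c`. -/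
def sphericalCap {E : Type*} [NormedAddCommGroup E] [InnerProductSpace ℝ E] (e : E) (c : ℝ) :
    Set E :=
  {x | ‖x‖ = 1 ∧ c ≤ ⟪e, x⟫}

section Caps

variable {E F : Type*} [NormedAddCommGroup E] [InnerProductSpace ℝ E]
  [NormedAddCommGroup F] [InnerProductSpace ℝ F] {e : E} {c : ℝ}
  {L : E ≃ₗᵢ[ℝ] WithLp 2 (ℝ × F)}

theorem sphericalCap_subset_sphere (e : E) (c : ℝ) : sphericalCap e c ⊆ sphere 0 1 :=
  fun _ hx => mem_sphere_zero_iff_norm.2 hx.1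

theorem closedBall_subset_image_sphericalCap (hL : ∀ x, (L x).fst = ⟪e, x⟫) (hc : c ^ 2 ≤ 1) :
    closedBall 0 √(1 - c ^ 2) ⊆ (fun x => (L x).snd) '' sphericalCap e c := by
  intro u hu
  have hu_sq : ‖u‖ ^ 2 ≤ 1 - c ^ 2 :=
    (Real.le_sqrt (norm_nonneg u) (sub_nonneg.2 hc)).1 (mem_closedBall_zero_iff.1 hu)
  let x := L.symm (WithLp.toLp 2 (√(1 - ‖u‖ ^ 2), u))
  have hx : L x = WithLp.toLp 2 (√(1 - ‖u‖ ^ 2), u) := L.apply_symm_apply _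
  have hex : ⟪e, x⟫ = √(1 - ‖u‖ ^ 2) := by rw [← hL, hx, WithLp.toLp_fst]
  have hxu : (L x).snd = u := by rw [hx, WithLp.toLp_snd]
  refine ⟨x, ⟨?_, ?_⟩, hxu⟩
  · rw [← pow_eq_one_iff_of_nonneg (norm_nonneg x) two_ne_zero,
      norm_sq_eq_inner_sq_add_norm_snd_sq hL, hex, hxu, Real.sq_sqrt (by nlinarith),
      sub_add_cancel]
  · rw [hex]
    exact Real.le_sqrt_of_sq_le (by linarith)

theorem mapsTo_snd_sphericalCap (hL : ∀ x, (L x).fst = ⟪e, x⟫) (hc : 0 ≤ c) :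
    Set.MapsTo (fun x => (L x).snd) (sphericalCap e c) (closedBall 0 √(1 - c ^ 2)) := by
  rintro x ⟨hx, hcx⟩
  have h := norm_sq_eq_inner_sq_add_norm_snd_sq hL x
  rw [hx] at h
  exact mem_closedBall_zero_iff.2 (Real.le_sqrt_of_sq_le (by nlinarith))

theorem mul_dist_le_dist_snd_of_mem_sphericalCap (hL : ∀ x, (L x).fst = ⟪e, x⟫) (hc : 0 ≤ c)
    {x y : E} (hx : x ∈ sphericalCap e c) (hy : y ∈ sphericalCap e c) :
    c * dist x y ≤ dist (L x).snd (L y).snd := by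
  obtain ⟨hx, hcx⟩ := hx
  obtain ⟨hy, hcy⟩ := hy
  have hx_sq := norm_sq_eq_inner_sq_add_norm_snd_sq hL x
  have hy_sq := norm_sq_eq_inner_sq_add_norm_snd_sq hL y
  have hxy_sq := norm_sq_eq_inner_sq_add_norm_snd_sq hL (x - y)
  rw [hx] at hx_sq
  rw [hy] at hy_sq
  rw [map_sub, WithLp.sub_snd, inner_sub_right] at hxy_sq
  rw [dist_eq_norm, dist_eq_norm]
  set u := (L x).snd
  set v := (L y).snd
  set a := ⟪e, x⟫
  set b := ⟪e, y⟫
  have h_norm : (‖u‖ - ‖v‖) ^ 2 ≤ ‖u - v‖ ^ 2 := by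
    rw [sq_le_sq, abs_norm]
    exact abs_norm_sub_norm_le u v
  have h_sum : (‖u‖ + ‖v‖) ^ 2 ≤ 4 * (1 - c ^ 2) := by
    nlinarith [sq_nonneg (‖u‖ - ‖v‖)]
  have h_heights : (2 * c) ^ 2 * (a - b) ^ 2 ≤ 4 * (1 - c ^ 2) * ‖u - v‖ ^ 2 := calc
    (2 * c) ^ 2 * (a - b) ^ 2 ≤ (a + b) ^ 2 * (a - b) ^ 2 := by gcongr; linarith
    _ = (‖u‖ + ‖v‖) ^ 2 * (‖u‖ - ‖v‖) ^ 2 := by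
      have h : (a + b) * (a - b) = (‖u‖ + ‖v‖) * (‖v‖ - ‖u‖) := by
        linear_combination hy_sq - hx_sq
      linear_combination ((a + b) * (a - b) + (‖u‖ + ‖v‖) * (‖v‖ - ‖u‖)) * h
    _ ≤ 4 * (1 - c ^ 2) * ‖u - v‖ ^ 2 := mul_le_mul h_sum h_norm (sq_nonneg _) (by nlinarith)
  refine le_of_sq_le_sq ?_ (norm_nonneg _)
  rw [mul_pow, hxy_sq]
  linarith

end Caps

section HausdorffCaps

theorem hausdorffMeasure_le_of_antilipschitzWith_domRestrict {X Y : Type*} [EMetricSpace X]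
    [MeasurableSpace X] [BorelSpace X] [EMetricSpace Y] [MeasurableSpace Y] [BorelSpace Y]
    {f : X → Y} {s : Set X} {K : ℝ≥0} {r : ℝ} (hf : AntilipschitzWith K (s.domRestrict f))
    (hr : 0 ≤ r) :
    μH[r] s ≤ K ^ r * μH[r] (f '' s) := by
  have h := hf.le_hausdorffMeasure_image hr Set.univ
  rwa [← isometry_subtype_coe.hausdorffMeasure_image (Or.inl hr), Set.image_univ,
    Subtype.range_coe, Set.image_univ, Set.range_domRestrict] at h

theorem hausdorffMeasure_closedBall_zero {F : Type*} [NormedAddCommGroup F] [NormedSpace ℝ F]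
    [MeasurableSpace F] [BorelSpace F] (d : ℕ) {s : ℝ} (hs : 0 < s) :
    μH[(d : ℝ)] (closedBall (0 : F) s) =
      ENNReal.ofReal (s ^ d) * μH[(d : ℝ)] (closedBall (0 : F) 1) := by
  rw [← smul_unitClosedBall_of_nonneg hs.le,
    Measure.hausdorffMeasure_smul₀ d.cast_nonneg hs.ne', ENNReal.smul_def, smul_eq_mul,
    NNReal.rpow_natCast, ENNReal.coe_pow, ENNReal.ofReal_pow hs.le, ← Real.enorm_of_nonneg hs.le]
  rfl

variable {E F : Type*} [NormedAddCommGroup E] [InnerProductSpace ℝ E] [MeasurableSpace E]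
  [BorelSpace E] [NormedAddCommGroup F] [InnerProductSpace ℝ F] [MeasurableSpace F]
  [BorelSpace F] {e : E} {c : ℝ} {L : E ≃ₗᵢ[ℝ] WithLp 2 (ℝ × F)}

theorem le_hausdorffMeasure_sphericalCap (hL : ∀ x, (L x).fst = ⟪e, x⟫) (d : ℕ)
    (hc : c ^ 2 < 1) :
    ENNReal.ofReal (√(1 - c ^ 2) ^ d) * μH[(d : ℝ)] (closedBall (0 : F) 1) ≤
      μH[(d : ℝ)] (sphericalCap e c) := by
  rw [← hausdorffMeasure_closedBall_zero d (Real.sqrt_pos.2 (sub_pos.2 hc))]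
  refine (measure_mono (closedBall_subset_image_sphericalCap hL hc.le)).trans ?_
  simpa using (lipschitzWith_snd L).hausdorffMeasure_image_le d.cast_nonneg (sphericalCap e c)

theorem hausdorffMeasure_sphericalCap_le (hL : ∀ x, (L x).fst = ⟪e, x⟫) (d : ℕ) (hc : 0 < c)
    (hc' : c < 1) :
    μH[(d : ℝ)] (sphericalCap e c) ≤
      ENNReal.ofReal ((√(1 - c ^ 2) / c) ^ d) * μH[(d : ℝ)] (closedBall (0 : F) 1) := by
  have h_anti : AntilipschitzWith (Real.toNNReal c⁻¹)
      ((sphericalCap e c).domRestrict fun x => (L x).snd) :=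
    AntilipschitzWith.of_le_mul_dist fun x y => by
      rw [Real.coe_toNNReal _ (by positivity), ← div_eq_inv_mul, le_div_iff₀' hc]
      exact mul_dist_le_dist_snd_of_mem_sphericalCap hL hc.le x.2 y.2
  calc μH[(d : ℝ)] (sphericalCap e c)
      ≤ ENNReal.ofReal c⁻¹ ^ (d : ℝ) * μH[(d : ℝ)] ((fun x => (L x).snd) '' sphericalCap e c) :=
        hausdorffMeasure_le_of_antilipschitzWith_domRestrict h_anti d.cast_nonneg
    _ ≤ ENNReal.ofReal c⁻¹ ^ (d : ℝ) * μH[(d : ℝ)] (closedBall (0 : F) √(1 - c ^ 2)) := by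
        gcongr
        exact (mapsTo_snd_sphericalCap hL hc.le).image_subset
    _ = ENNReal.ofReal ((√(1 - c ^ 2) / c) ^ d) * μH[(d : ℝ)] (closedBall (0 : F) 1) := by
        rw [hausdorffMeasure_closedBall_zero d (Real.sqrt_pos.2 (by nlinarith)), ← mul_assoc,
          ENNReal.rpow_natCast, ← ENNReal.ofReal_pow (by positivity),
          ← ENNReal.ofReal_mul (by positivity), ← mul_pow, div_eq_inv_mul]

end HausdorffCaps

section ConeVolumes

/-- The solid right circular cone in `ℝ × F` with apex `0`, height `1` and base radius `t`. -/
def rightCone (F : Type*) [Norm F] (t : ℝ) : Set (ℝ × F) :=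
  {p | p.1 ∈ Set.Ico 0 1 ∧ ‖p.2‖ ≤ t * p.1}

/-- The sector of the unit ball over the spherical cap with centre `e` and height `c`. -/
def sphericalSector {E : Type*} [NormedAddCommGroup E] [InnerProductSpace ℝ E] (e : E) (c : ℝ) :
    Set E :=
  {x | x ∈ ball 0 1 ∧ c * ‖x‖ ≤ ⟪e, x⟫}

theorem measurableSet_rightCone (F : Type*) [NormedAddCommGroup F] [MeasurableSpace F]
    [OpensMeasurableSpace F] (t : ℝ) : MeasurableSet (rightCone F t) :=
  (measurable_fst measurableSet_Ico).inter
    (measurableSet_le measurable_snd.norm (measurable_fst.const_mul t))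

theorem volume_rightCone (F : Type*) [NormedAddCommGroup F] [InnerProductSpace ℝ F]
    [FiniteDimensional ℝ F] [MeasurableSpace F] [BorelSpace F] {t : ℝ} (ht : 0 ≤ t) :
    volume (rightCone F t) =
      ENNReal.ofReal (t ^ Module.finrank ℝ F / (Module.finrank ℝ F + 1)) *
        volume (ball (0 : F) 1) := by
  set n := Module.finrank ℝ F
  have h_slice : ∀ h : ℝ, volume (Prod.mk h ⁻¹' rightCone F t) =
      (Set.Ico (0 : ℝ) 1).indicator
        (fun h => ENNReal.ofReal ((t * h) ^ n) * volume (ball (0 : F) 1)) h := by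
    intro h
    by_cases hh : h ∈ Set.Ico (0 : ℝ) 1
    · rw [Set.indicator_of_mem hh, ← Measure.addHaar_closedBall volume (0 : F)
        (mul_nonneg ht hh.1)]
      congr 1 with u
      exact (and_iff_right hh).trans mem_closedBall_zero_iff.symm
    · have h_empty : Prod.mk h ⁻¹' rightCone F t = ∅ :=
        Set.eq_empty_of_forall_notMem fun u hu => hh hu.1
      rw [Set.indicator_of_notMem hh, h_empty, measure_empty]
  have h_integral : ∫ h in Set.Ico (0 : ℝ) 1, (t * h) ^ n = t ^ n / (n + 1) := by
    simp only [mul_pow]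
    rw [integral_const_mul, integral_Ico_eq_integral_Ioc,
      ← intervalIntegral.integral_of_le zero_le_one, integral_pow]
    simp [div_eq_mul_inv]
  rw [Measure.volume_eq_prod, Measure.prod_apply (measurableSet_rightCone F t)]
  simp_rw [h_slice]
  rw [lintegral_indicator measurableSet_Ico, lintegral_mul_const _ (by fun_prop), ← h_integral,
    ofReal_integral_eq_lintegral_ofReal]
  · exact (Continuous.integrableOn_Icc (by fun_prop)).mono_set Set.Ico_subset_Icc_self
  · filter_upwards [ae_restrict_mem measurableSet_Ico] with h hh
    exact pow_nonneg (mul_nonneg ht hh.1) _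

variable {E F : Type*} [NormedAddCommGroup E] [InnerProductSpace ℝ E]
  [NormedAddCommGroup F] [InnerProductSpace ℝ F] {e : E} {c : ℝ}
  {L : E ≃ₗᵢ[ℝ] WithLp 2 (ℝ × F)}

theorem mapsTo_sphericalSector_rightCone (hL : ∀ x, (L x).fst = ⟪e, x⟫) (he : ‖e‖ = 1)
    (hc : 0 < c) (hc' : c < 1) :
    Set.MapsTo (fun x => (⟪e, x⟫, (L x).snd)) (sphericalSector e c)
      (rightCone F (√(1 - c ^ 2) / c)) := by
  rintro x ⟨hx, hcx⟩
  have h_inner_le : ⟪e, x⟫ ≤ ‖x‖ := by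
    simpa [he] using real_inner_le_norm e x
  have h_nonneg : 0 ≤ ⟪e, x⟫ := hcx.trans' (by positivity)
  have h_sq : (c * ‖x‖) ^ 2 ≤ ⟪e, x⟫ ^ 2 := by gcongr
  rw [mul_pow, norm_sq_eq_inner_sq_add_norm_snd_sq hL] at h_sq
  refine ⟨⟨h_nonneg, h_inner_le.trans_lt (mem_ball_zero_iff.1 hx)⟩,
    le_of_sq_le_sq ?_ (by positivity)⟩
  rw [mul_pow, div_pow, Real.sq_sqrt (by nlinarith), div_mul_eq_mul_div,
    le_div_iff₀ (by positivity)]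
  linarith

theorem smul_mem_sphericalSector (hL : ∀ x, (L x).fst = ⟪e, x⟫) (hc : 0 < c) (hc' : c < 1) {x : E}
    (hx : (⟪e, x⟫, (L x).snd) ∈ rightCone F (√(1 - c ^ 2) / c)) :
    c • x ∈ sphericalSector e c := by
  obtain ⟨⟨h_nonneg, h_lt⟩, h_snd⟩ := hx
  have h_norm : c * ‖x‖ ≤ ⟪e, x⟫ := by
    refine le_of_sq_le_sq ?_ h_nonneg
    have h_sq : ‖(L x).snd‖ ^ 2 ≤ (√(1 - c ^ 2) / c * ⟪e, x⟫) ^ 2 := by gcongr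
    rw [mul_pow, div_pow, Real.sq_sqrt (by nlinarith)] at h_sq
    calc (c * ‖x‖) ^ 2 = c ^ 2 * (⟪e, x⟫ ^ 2 + ‖(L x).snd‖ ^ 2) := by
          rw [mul_pow, norm_sq_eq_inner_sq_add_norm_snd_sq hL]
      _ ≤ c ^ 2 * (⟪e, x⟫ ^ 2 + (1 - c ^ 2) / c ^ 2 * ⟪e, x⟫ ^ 2) := by gcongr
      _ = ⟪e, x⟫ ^ 2 := by field_simp; ring
  have h_norm_smul : ‖c • x‖ = c * ‖x‖ := by rw [norm_smul, Real.norm_of_nonneg hc.le]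
  refine ⟨?_, ?_⟩
  · rw [mem_ball_zero_iff, h_norm_smul]
    exact h_norm.trans_lt h_lt
  · rw [h_norm_smul, inner_smul_right]
    gcongr

variable [FiniteDimensional ℝ E] [MeasurableSpace E] [BorelSpace E] [FiniteDimensional ℝ F]
  [MeasurableSpace F] [BorelSpace F]

theorem volume_sphericalSector_le (hL : ∀ x, (L x).fst = ⟪e, x⟫) (he : ‖e‖ = 1) (hc : 0 < c)
    (hc' : c < 1) :
    volume (sphericalSector e c) ≤
      ENNReal.ofReal ((√(1 - c ^ 2) / c) ^ Module.finrank ℝ F / (Module.finrank ℝ F + 1)) *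
        volume (ball (0 : F) 1) := by
  rw [← volume_rightCone F (by positivity), ← (measurePreserving_inner_snd hL).measure_preimage
    (measurableSet_rightCone F _).nullMeasurableSet]
  exact measure_mono (mapsTo_sphericalSector_rightCone hL he hc hc')

open scoped Pointwise in
theorem le_volume_sphericalSector (hL : ∀ x, (L x).fst = ⟪e, x⟫) (hc : 0 < c) (hc' : c < 1) :
    ENNReal.ofReal (c ^ Module.finrank ℝ E *
        ((√(1 - c ^ 2) / c) ^ Module.finrank ℝ F / (Module.finrank ℝ F + 1))) *
      volume (ball (0 : F) 1) ≤ volume (sphericalSector e c) := by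
  rw [ENNReal.ofReal_mul (by positivity), mul_assoc, ← volume_rightCone F (by positivity),
    ← (measurePreserving_inner_snd hL).measure_preimage
      (measurableSet_rightCone F _).nullMeasurableSet, ← Measure.addHaar_smul_of_nonneg _ hc.le]
  exact measure_mono (Set.image_subset_iff.2 fun x => smul_mem_sphericalSector hL hc hc')

end ConeVolumes

section HausdorffSphere

theorem ae_restrict_sphere_norm_eq_one {E : Type*} [NormedAddCommGroup E] [MeasurableSpace E]
    [OpensMeasurableSpace E] (μ : Measure E) : ∀ᵐ y ∂μ.restrict (sphere 0 1), ‖y‖ = 1 :=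
  (ae_restrict_mem isClosed_sphere.measurableSet).mono fun _ => mem_sphere_zero_iff_norm.1

variable {E : Type*} [NormedAddCommGroup E] [InnerProductSpace ℝ E] [FiniteDimensional ℝ E]
  [MeasurableSpace E] [BorelSpace E] {d : ℕ}

theorem hausdorffMeasure_sphere_ne_zero (hE : Module.finrank ℝ E = d + 1) :
    μH[(d : ℝ)] (sphere (0 : E) 1) ≠ 0 := by
  have : Nontrivial E := Module.nontrivial_of_finrank_eq_succ hE
  obtain ⟨e, he⟩ := exists_norm_eq E zero_le_one
  obtain ⟨L, hL⟩ := exists_linearIsometryEquiv_fst_eq_inner hE he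
  have h_cap := le_hausdorffMeasure_sphericalCap hL d (c := 0) (by norm_num)
  have h_ball := measure_closedBall_pos μH[(d : ℝ)] (0 : EuclideanSpace ℝ (Fin d)) one_pos
  have h_pos := h_ball.trans_le (by simpa using h_cap)
  exact (h_pos.trans_le (measure_mono (sphericalCap_subset_sphere e 0))).ne'

theorem hausdorffMeasure_sphere_ne_top (hE : Module.finrank ℝ E = d + 1) :
    μH[(d : ℝ)] (sphere (0 : E) 1) ≠ ∞ := by
  refine ((isCompact_sphere (0 : E) 1).measure_lt_top_of_nhdsWithin fun e he => ?_).ne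
  have he : ‖e‖ = 1 := mem_sphere_zero_iff_norm.1 he
  obtain ⟨L, hL⟩ := exists_linearIsometryEquiv_fst_eq_inner hE he
  refine ⟨sphericalCap e (1 / 2), ?_, ?_⟩
  · have h_nhds : {x | 1 / 2 < ⟪e, x⟫} ∈ 𝓝 e :=
      (isOpen_lt continuous_const (by fun_prop)).mem_nhds (by simp [he]; norm_num)
    filter_upwards [nhdsWithin_le_nhds h_nhds, self_mem_nhdsWithin] with x hx hx'
    exact ⟨mem_sphere_zero_iff_norm.1 hx', hx.le⟩
  · exact (hausdorffMeasure_sphericalCap_le hL d one_half_pos one_half_lt_one).trans_lt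
      (ENNReal.mul_lt_top ENNReal.ofReal_lt_top measure_closedBall_lt_top)

theorem lintegral_volume_sphericalSector [Nontrivial E] (ν : Measure E) [SFinite ν]
    (hν : ∀ᵐ y ∂ν, ‖y‖ = 1) (c : ℝ) :
    ∫⁻ y, volume (sphericalSector y c) ∂ν =
      ∫⁻ x in ball 0 1, ν (sphericalCap (‖x‖⁻¹ • x) c) := by
  have hA : MeasurableSet {p : E × E | c * ‖p.2‖ ≤ ⟪p.1, p.2⟫} :=
    measurableSet_le (by fun_prop) (by fun_prop)
  calc ∫⁻ y, volume (sphericalSector y c) ∂ν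
      = ∫⁻ y, volume.restrict (ball 0 1) (Prod.mk y ⁻¹' {p : E × E | c * ‖p.2‖ ≤ ⟪p.1, p.2⟫}) ∂ν :=
        lintegral_congr fun y => by
          rw [Measure.restrict_apply (measurable_prodMk_left hA), Set.inter_comm]
          rfl
    _ = ∫⁻ x in ball 0 1, ν ((fun y => (y, x)) ⁻¹' {p : E × E | c * ‖p.2‖ ≤ ⟪p.1, p.2⟫}) := by
        rw [← Measure.prod_apply hA, Measure.prod_apply_symm hA]
    _ = ∫⁻ x in ball 0 1, ν (sphericalCap (‖x‖⁻¹ • x) c) := by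
        refine lintegral_congr_ae ?_
        filter_upwards [ae_restrict_of_ae (Measure.ae_ne volume (0 : E))] with x hx
        refine measure_congr ?_
        filter_upwards [hν] with y hy
        refine propext ?_
        change c * ‖x‖ ≤ ⟪y, x⟫ ↔ ‖y‖ = 1 ∧ c ≤ ⟪‖x‖⁻¹ • x, y⟫
        rw [real_inner_smul_left, ← div_eq_inv_mul, le_div_iff₀ (norm_pos_iff.2 hx),
          real_inner_comm, and_iff_right hy]

theorem mul_volume_ball_le_mul_hausdorffMeasure_sphere (hE : Module.finrank ℝ E = d + 1) {c : ℝ}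
    (hc : 0 < c) (hc' : c < 1) :
    ENNReal.ofReal (√(1 - c ^ 2) ^ d) * μH[(d : ℝ)] (closedBall (0 : EuclideanSpace ℝ (Fin d)) 1) *
        volume (ball (0 : E) 1) ≤
      ENNReal.ofReal ((√(1 - c ^ 2) / c) ^ d / (d + 1)) *
        volume (ball (0 : EuclideanSpace ℝ (Fin d)) 1) * μH[(d : ℝ)] (sphere (0 : E) 1) := by
  have : Nontrivial E := Module.nontrivial_of_finrank_eq_succ hE
  have : IsFiniteMeasure (μH[(d : ℝ)].restrict (sphere (0 : E) 1)) :=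
    isFiniteMeasure_restrict.2 (hausdorffMeasure_sphere_ne_top hE)
  have hν := ae_restrict_sphere_norm_eq_one (μH[(d : ℝ)] : Measure E)
  rw [← setLIntegral_const, ← Measure.restrict_apply_univ (sphere (0 : E) 1), ← lintegral_const]
  calc _ ≤ ∫⁻ x in ball 0 1, μH[(d : ℝ)].restrict (sphere (0 : E) 1)
          (sphericalCap (‖x‖⁻¹ • x) c) := by
        refine lintegral_mono_ae ?_
        filter_upwards [ae_restrict_of_ae (Measure.ae_ne volume (0 : E))] with x hx
        obtain ⟨L, hL⟩ :=
          exists_linearIsometryEquiv_fst_eq_inner hE (norm_smul_inv_norm (𝕜 := ℝ) hx)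
        rw [Measure.restrict_eq_self _ (sphericalCap_subset_sphere _ c)]
        exact le_hausdorffMeasure_sphericalCap hL d (by nlinarith)
    _ = ∫⁻ y, volume (sphericalSector y c) ∂μH[(d : ℝ)].restrict (sphere (0 : E) 1) :=
        (lintegral_volume_sphericalSector _ hν c).symm
    _ ≤ _ := by
        refine lintegral_mono_ae ?_
        filter_upwards [hν] with y hy
        obtain ⟨L, hL⟩ := exists_linearIsometryEquiv_fst_eq_inner hE hy
        simpa using volume_sphericalSector_le hL hy hc hc'

theorem mul_hausdorffMeasure_sphere_le_mul_volume_ball (hE : Module.finrank ℝ E = d + 1) {c : ℝ}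
    (hc : 0 < c) (hc' : c < 1) :
    ENNReal.ofReal (c ^ (d + 1) * ((√(1 - c ^ 2) / c) ^ d / (d + 1))) *
        volume (ball (0 : EuclideanSpace ℝ (Fin d)) 1) * μH[(d : ℝ)] (sphere (0 : E) 1) ≤
      ENNReal.ofReal ((√(1 - c ^ 2) / c) ^ d) *
        μH[(d : ℝ)] (closedBall (0 : EuclideanSpace ℝ (Fin d)) 1) * volume (ball (0 : E) 1) := by
  have : Nontrivial E := Module.nontrivial_of_finrank_eq_succ hE
  have : IsFiniteMeasure (μH[(d : ℝ)].restrict (sphere (0 : E) 1)) :=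
    isFiniteMeasure_restrict.2 (hausdorffMeasure_sphere_ne_top hE)
  have hν := ae_restrict_sphere_norm_eq_one (μH[(d : ℝ)] : Measure E)
  rw [← Measure.restrict_apply_univ (sphere (0 : E) 1), ← lintegral_const,
    ← setLIntegral_const (ball (0 : E) 1)]
  calc _ ≤ ∫⁻ y, volume (sphericalSector y c) ∂μH[(d : ℝ)].restrict (sphere (0 : E) 1) := by
        refine lintegral_mono_ae ?_
        filter_upwards [hν] with y hy
        obtain ⟨L, hL⟩ := exists_linearIsometryEquiv_fst_eq_inner hE hy
        simpa [hE] using le_volume_sphericalSector hL hc hc'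
    _ = ∫⁻ x in ball 0 1, μH[(d : ℝ)].restrict (sphere (0 : E) 1)
          (sphericalCap (‖x‖⁻¹ • x) c) := lintegral_volume_sphericalSector _ hν c
    _ ≤ _ := by
        refine lintegral_mono_ae ?_
        filter_upwards [ae_restrict_of_ae (Measure.ae_ne volume (0 : E))] with x hx
        obtain ⟨L, hL⟩ :=
          exists_linearIsometryEquiv_fst_eq_inner hE (norm_smul_inv_norm (𝕜 := ℝ) hx)
        exact (Measure.restrict_apply_le _ _).trans
          (hausdorffMeasure_sphericalCap_le hL d hc hc')

theorem le_of_forall_pow_mul_le {a b : ℝ} (n : ℕ) (h : ∀ c, 0 < c → c < 1 → c ^ n * a ≤ b) :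
    a ≤ b := by
  have h_lim : Tendsto (fun c : ℝ => c ^ n * a) (𝓝[<] 1) (𝓝 a) := by
    have h_cont : ContinuousAt (fun c : ℝ => c ^ n * a) 1 := by fun_prop
    simpa using h_cont.tendsto.mono_left nhdsWithin_le_nhds
  refine le_of_tendsto h_lim ?_
  filter_upwards [Ioo_mem_nhdsLT zero_lt_one] with c hc using h c hc.1 hc.2

theorem hausdorffMeasure_closedBall_div_hausdorffMeasure_sphere (hE : Module.finrank ℝ E = d + 1) :
    (μH[(d : ℝ)] (closedBall (0 : EuclideanSpace ℝ (Fin d)) 1)).toReal /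
        (μH[(d : ℝ)] (sphere (0 : E) 1)).toReal =
      volume.real (ball (0 : EuclideanSpace ℝ (Fin d)) 1) /
        ((d + 1) * volume.real (ball (0 : E) 1)) := by
  have hS₀ := hausdorffMeasure_sphere_ne_zero hE
  have hS := hausdorffMeasure_sphere_ne_top hE
  have hβ : μH[(d : ℝ)] (closedBall (0 : EuclideanSpace ℝ (Fin d)) 1) ≠ ∞ :=
    measure_closedBall_lt_top.ne
  have hω : volume (ball (0 : EuclideanSpace ℝ (Fin d)) 1) ≠ ∞ := measure_ball_lt_top.ne
  have hΩ : volume (ball (0 : E) 1) ≠ ∞ := measure_ball_lt_top.ne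
  have hΩ₀ : 0 < volume.real (ball (0 : E) 1) :=
    ENNReal.toReal_pos (measure_ball_pos _ _ one_pos).ne' hΩ
  rw [div_eq_div_iff (ENNReal.toReal_pos hS₀ hS).ne' (by positivity)]
  refine le_antisymm (le_of_forall_pow_mul_le d fun c hc hc' => ?_)
    (le_of_forall_pow_mul_le (d + 1) fun c hc hc' => ?_)
  -- Both estimates carry the factor `t ^ d`, where `t` is the base radius of the cone.
  all_goals
    have h_sqrt : 0 < √(1 - c ^ 2) := Real.sqrt_pos.2 (by nlinarith)
    obtain ⟨t, ht⟩ : ∃ t, √(1 - c ^ 2) = c * t := ⟨_, (mul_div_cancel₀ _ hc.ne').symm⟩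
    have ht₀ : 0 < t := pos_of_mul_pos_right (ht ▸ h_sqrt) hc.le
    refine le_of_mul_le_mul_left ?_ (show 0 < t ^ d / (d + 1) by positivity)
  · have h := ENNReal.toReal_mono (by finiteness)
      (mul_volume_ball_le_mul_hausdorffMeasure_sphere hE hc hc')
    rw [ht, mul_pow, mul_div_cancel_left₀ _ hc.ne'] at h
    simp only [ENNReal.toReal_mul] at h
    rw [ENNReal.toReal_ofReal (by positivity), ENNReal.toReal_ofReal (by positivity)] at h
    refine (Eq.le ?_).trans (h.trans_eq ?_)
    all_goals
      rw [measureReal_def]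
      field_simp
  · have h := ENNReal.toReal_mono (by finiteness)
      (mul_hausdorffMeasure_sphere_le_mul_volume_ball hE hc hc')
    rw [ht, mul_div_cancel_left₀ _ hc.ne'] at h
    simp only [ENNReal.toReal_mul] at h
    rw [ENNReal.toReal_ofReal (by positivity), ENNReal.toReal_ofReal (by positivity)] at h
    refine (Eq.le ?_).trans (h.trans_eq ?_)
    all_goals
      rw [measureReal_def]
      field_simp

end HausdorffSphere

section UniformMeasures

variable {E : Type*} [NormedAddCommGroup E] [InnerProductSpace ℝ E] [MeasurableSpace E]

/-- A measure is uniform on the unit sphere if it is concentrated there and invariant under all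
linear isometries; it is not required to be normalized. -/
structure IsUniformOnSphere (σ : Measure E) : Prop where
  ae_norm_eq_one : ∀ᵐ x ∂σ, ‖x‖ = 1
  measurePreserving : ∀ L : E ≃ₗᵢ[ℝ] E, MeasurePreserving L σ σ

/-- Half the mean of `|⟪x, y⟫|` over independent `σ`-distributed points `x` and `y`: the factor
relating discrepancy and distance energy in Stolarsky's principle. -/
def stolarskyConst (σ : Measure E) : ℝ :=
  (∫ x, ∫ y, |⟪x, y⟫| ∂σ ∂σ) / 2

theorem stolarskyConst_nonneg (σ : Measure E) : 0 ≤ stolarskyConst σ := by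
  rw [stolarskyConst]
  positivity

namespace IsUniformOnSphere

variable [BorelSpace E] {σ : Measure E}

theorem integral_comp_linearIsometryEquiv (hσ : IsUniformOnSphere σ) (L : E ≃ₗᵢ[ℝ] E)
    (f : E → ℝ) : ∫ y, f (L y) ∂σ = ∫ y, f y ∂σ :=
  (hσ.measurePreserving L).integral_comp L.toHomeomorph.measurableEmbedding f

theorem integral_eq_of_norm_eq (hσ : IsUniformOnSphere σ) {K : E → E → ℝ}
    (hK : ∀ (L : E ≃ₗᵢ[ℝ] E) x y, K (L x) (L y) = K x y) {x x' : E} (h : ‖x‖ = ‖x'‖) :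
    ∫ y, K x y ∂σ = ∫ y, K x' y ∂σ := by
  let L : E ≃ₗᵢ[ℝ] E := Submodule.reflection (ℝ ∙ (x - x'))ᗮ
  have hL : L x = x' := Submodule.reflection_sub h
  rw [← hσ.integral_comp_linearIsometryEquiv L (K x')]
  simp only [← hL, hK]

theorem integral_inner (hσ : IsUniformOnSphere σ) (v : E) : ∫ y, ⟪y, v⟫ ∂σ = 0 := by
  have h := hσ.integral_comp_linearIsometryEquiv (LinearIsometryEquiv.neg ℝ) fun y => ⟪y, v⟫
  simp only [LinearIsometryEquiv.coe_neg, inner_neg_left, integral_neg] at h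
  linarith

theorem integral_abs_inner [IsProbabilityMeasure σ] (hσ : IsUniformOnSphere σ) (v : E) :
    ∫ y, |⟪y, v⟫| ∂σ = 2 * stolarskyConst σ * ‖v‖ := by
  have h_inv (x x' : E) (h : ‖x‖ = ‖x'‖) : ∫ y, |⟪x, y⟫| ∂σ = ∫ y, |⟪x', y⟫| ∂σ :=
    hσ.integral_eq_of_norm_eq (K := fun x y => |⟪x, y⟫|) (fun L x y => by rw [L.inner_map_map]) h
  have h_scale : ∀ᵐ x ∂σ, ∫ y, |⟪y, v⟫| ∂σ = ‖v‖ * ∫ y, |⟪x, y⟫| ∂σ := by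
    filter_upwards [hσ.ae_norm_eq_one] with x hx
    have h_norm : ‖v‖ = ‖‖v‖ • x‖ := by rw [norm_smul, norm_norm, hx, mul_one]
    simp only [real_inner_comm v]
    rw [h_inv _ _ h_norm, ← integral_const_mul]
    simp only [real_inner_smul_left, abs_mul, abs_norm]
  have h := integral_congr_ae h_scale
  rw [integral_const_mul, integral_const, probReal_univ, one_smul] at h
  rw [h, stolarskyConst]
  ring

variable [SecondCountableTopology E]

theorem integrable_inner [IsFiniteMeasure σ] (hσ : IsUniformOnSphere σ) (v : E) :
    Integrable (fun y => ⟪y, v⟫) σ := by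
  refine Integrable.of_bound (by fun_prop) ‖v‖ ?_
  filter_upwards [hσ.ae_norm_eq_one] with y hy
  simpa [hy] using norm_inner_le_norm (𝕜 := ℝ) y v

theorem integral_min_inner [IsProbabilityMeasure σ] (hσ : IsUniformOnSphere σ) (v w : E) :
    ∫ y, min ⟪y, v⟫ ⟪y, w⟫ ∂σ = -(stolarskyConst σ * dist v w) := by
  have h_min (y : E) : min ⟪y, v⟫ ⟪y, w⟫ = 2⁻¹ * (⟪y, v⟫ + ⟪y, w⟫ - |⟪y, w - v⟫|) := by
    rw [inner_sub_right]
    exact inf_eq_half_smul_add_sub_abs_sub' ℝ _ _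
  have hv := hσ.integrable_inner v
  have hw := hσ.integrable_inner w
  have hvw := (hσ.integrable_inner (w - v)).abs
  simp only [h_min]
  rw [integral_const_mul, integral_sub (by exact hv.add hw) hvw, integral_add hv hw,
    hσ.integral_inner, hσ.integral_inner, hσ.integral_abs_inner, dist_eq_norm']
  ring

end IsUniformOnSphere

end UniformMeasures

section GaussianMoments

variable {E : Type*} [NormedAddCommGroup E] [InnerProductSpace ℝ E] [FiniteDimensional ℝ E]
  [MeasurableSpace E] [BorelSpace E]

theorem volume_ball_mul_Gamma :
    volume.real (ball (0 : E) 1) * Gamma (Module.finrank ℝ E / 2 + 1) =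
      ∫ x : E, exp (-‖x‖ ^ 2) := by
  have h := measure_unitBall_eq_integral_div_gamma (volume : Measure E) two_pos
  simp only [rpow_two] at h
  rw [measureReal_def, h, ENNReal.toReal_ofReal (by positivity), div_mul_cancel₀]
  positivity

variable {d : ℕ}

theorem integral_norm_mul_exp_neg_norm_sq (hE : Module.finrank ℝ E = d + 1) :
    ∫ x : E, ‖x‖ * exp (-‖x‖ ^ 2) =
      (d + 1) * volume.real (ball (0 : E) 1) * (Gamma (d / 2 + 1) / 2) := by
  have : Nontrivial E := Module.nontrivial_of_finrank_eq_succ hE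
  have h_radial : ∫ r in Set.Ioi (0 : ℝ), r ^ (d + 1) * exp (-r ^ 2) = Gamma (d / 2 + 1) / 2 := by
    have h := integral_rpow_mul_exp_neg_rpow two_pos (q := (d + 1 : ℕ)) (by norm_cast; lia)
    simp only [rpow_two, rpow_natCast] at h
    rw [h]
    push_cast
    ring_nf
  rw [integral_fun_norm_addHaar volume fun r => r * exp (-r ^ 2), hE, add_tsub_cancel_right,
    ← h_radial]
  simp only [smul_eq_mul, nsmul_eq_mul, ← mul_assoc, ← pow_succ]
  push_cast
  rfl

theorem integral_abs_mul_exp_neg_sq : ∫ r : ℝ, |r| * exp (-r ^ 2) = 1 := by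
  have h := integral_rpow_mul_exp_neg_rpow two_pos (q := 1) (by norm_num)
  simp only [rpow_two, rpow_one] at h
  have h_abs := integral_comp_abs (f := fun r => r * exp (-r ^ 2))
  simp only [sq_abs] at h_abs
  rw [h_abs, h]
  norm_num

theorem integral_abs_inner_mul_exp_neg_norm_sq (hE : Module.finrank ℝ E = d + 1) {e : E}
    (he : ‖e‖ = 1) :
    ∫ x, |⟪e, x⟫| * exp (-‖x‖ ^ 2) = ∫ u : EuclideanSpace ℝ (Fin d), exp (-‖u‖ ^ 2) := by
  obtain ⟨L, hL⟩ := exists_linearIsometryEquiv_fst_eq_inner hE he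
  have hmp := measurePreserving_inner_snd hL
  calc ∫ x, |⟪e, x⟫| * exp (-‖x‖ ^ 2)
      = ∫ x, |⟪e, x⟫| * exp (-⟪e, x⟫ ^ 2) * exp (-‖(L x).snd‖ ^ 2) := by
        simp only [norm_sq_eq_inner_sq_add_norm_snd_sq hL, neg_add, exp_add, mul_assoc]
    _ = ∫ p : ℝ × EuclideanSpace ℝ (Fin d), |p.1| * exp (-p.1 ^ 2) * exp (-‖p.2‖ ^ 2) := by
        rw [← hmp.map_eq, integral_map hmp.measurable.aemeasurable (by fun_prop)]
    _ = ∫ u : EuclideanSpace ℝ (Fin d), exp (-‖u‖ ^ 2) := by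
        rw [Measure.volume_eq_prod, integral_prod_mul (fun r : ℝ => |r| * exp (-r ^ 2))
          fun u : EuclideanSpace ℝ (Fin d) => exp (-‖u‖ ^ 2), integral_abs_mul_exp_neg_sq, one_mul]

theorem IsUniformOnSphere.integral_exp_neg_norm_sq {σ : Measure E} [IsProbabilityMeasure σ]
    (hσ : IsUniformOnSphere σ) (hE : Module.finrank ℝ E = d + 1) :
    ∫ u : EuclideanSpace ℝ (Fin d), exp (-‖u‖ ^ 2) =
      2 * stolarskyConst σ * ∫ x : E, ‖x‖ * exp (-‖x‖ ^ 2) := by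
  have h_ne : ∫ x : E, ‖x‖ * exp (-‖x‖ ^ 2) ≠ 0 := by
    have h_ball : 0 < volume.real (ball (0 : E) 1) :=
      ENNReal.toReal_pos (measure_ball_pos _ _ one_pos).ne' measure_ball_lt_top.ne
    rw [integral_norm_mul_exp_neg_norm_sq hE]
    positivity
  have h_int : Integrable (fun p : E × E => |⟪p.1, p.2⟫| * exp (-‖p.2‖ ^ 2)) (σ.prod volume) := by
    refine ((Integrable.of_integral_ne_zero h_ne).comp_snd σ).mono (by fun_prop) ?_
    filter_upwards [Measure.quasiMeasurePreserving_fst.ae hσ.ae_norm_eq_one] with p hp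
    rw [norm_mul, norm_mul, norm_norm, norm_abs_eq_norm]
    gcongr
    simpa [hp] using norm_inner_le_norm (𝕜 := ℝ) p.1 p.2
  calc ∫ u : EuclideanSpace ℝ (Fin d), exp (-‖u‖ ^ 2)
      = ∫ y, ∫ x : E, |⟪y, x⟫| * exp (-‖x‖ ^ 2) ∂volume ∂σ := by
        rw [integral_congr_ae (hσ.ae_norm_eq_one.mono fun y hy =>
          integral_abs_inner_mul_exp_neg_norm_sq hE hy), integral_const, probReal_univ, one_smul]
    _ = ∫ x : E, ∫ y, |⟪y, x⟫| * exp (-‖x‖ ^ 2) ∂σ := integral_integral_swap h_int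
    _ = 2 * stolarskyConst σ * ∫ x : E, ‖x‖ * exp (-‖x‖ ^ 2) := by
        rw [← integral_const_mul]
        congr with x
        rw [integral_mul_const, hσ.integral_abs_inner, mul_assoc]

theorem IsUniformOnSphere.stolarskyConst_eq {σ : Measure E} [IsProbabilityMeasure σ]
    (hσ : IsUniformOnSphere σ) (hE : Module.finrank ℝ E = d + 1) :
    stolarskyConst σ = volume.real (ball (0 : EuclideanSpace ℝ (Fin d)) 1) /
      ((d + 1) * volume.real (ball (0 : E) 1)) := by
  have h_ball : 0 < volume.real (ball (0 : E) 1) :=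
    ENNReal.toReal_pos (measure_ball_pos _ _ one_pos).ne' measure_ball_lt_top.ne
  have h_Gamma : 0 < Gamma ((d : ℝ) / 2 + 1) := Gamma_pos_of_pos (by positivity)
  have h := hσ.integral_exp_neg_norm_sq hE
  rw [integral_norm_mul_exp_neg_norm_sq hE, ← volume_ball_mul_Gamma,
    finrank_euclideanSpace_fin] at h
  rw [eq_div_iff (by positivity)]
  refine mul_right_cancel₀ h_Gamma.ne' ?_
  linear_combination -h

end GaussianMoments

section NormalizedSurfaceMeasure

variable {E : Type*} [NormedAddCommGroup E] [InnerProductSpace ℝ E] [MeasurableSpace E]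

theorem IsUniformOnSphere.smul {σ : Measure E} (hσ : IsUniformOnSphere σ) (c : ℝ≥0∞) :
    IsUniformOnSphere (c • σ) where
  ae_norm_eq_one := Measure.ae_smul_measure hσ.ae_norm_eq_one c
  measurePreserving L := (hσ.measurePreserving L).smul_measure c

theorem isUniformOnSphere_hausdorffMeasure_restrict [BorelSpace E] (r : ℝ) :
    IsUniformOnSphere (μH[r].restrict (sphere (0 : E) 1)) where
  ae_norm_eq_one := ae_restrict_sphere_norm_eq_one _
  measurePreserving L := by
    have h := (L.toIsometryEquiv.measurePreserving_hausdorffMeasure r).restrict_preimage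
      (isClosed_sphere (x := (0 : E)) (ε := 1)).measurableSet
    rwa [L.toIsometryEquiv.preimage_sphere, show L.toIsometryEquiv.symm 0 = 0 from L.symm.map_zero]
      at h

theorem isUniformOnSphere_sigmaMeasure (d : ℕ) : IsUniformOnSphere (sigmaMeasure d) :=
  (isUniformOnSphere_hausdorffMeasure_restrict _).smul _

instance isProbabilityMeasure_sigmaMeasure (d : ℕ) : IsProbabilityMeasure (sigmaMeasure d) where
  measure_univ := by
    have hE : Module.finrank ℝ (EuclideanSpace ℝ (Fin (d + 1))) = d + 1 :=
      finrank_euclideanSpace_fin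
    rw [sigmaMeasure, Measure.smul_apply, Measure.restrict_apply_univ, smul_eq_mul,
      ENNReal.inv_mul_cancel (hausdorffMeasure_sphere_ne_zero hE)
        (hausdorffMeasure_sphere_ne_top hE)]

theorem stolarskyConst_sigmaMeasure (d : ℕ) :
    stolarskyConst (sigmaMeasure d) =
      (μH[(d : ℝ)] (closedBall (0 : EuclideanSpace ℝ (Fin d)) 1)).toReal /
        (μH[(d : ℝ)] (sphere (0 : EuclideanSpace ℝ (Fin (d + 1))) 1)).toReal := by
  rw [(isUniformOnSphere_sigmaMeasure d).stolarskyConst_eq finrank_euclideanSpace_fin,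
    hausdorffMeasure_closedBall_div_hausdorffMeasure_sphere finrank_euclideanSpace_fin]

end NormalizedSurfaceMeasure

section Stolarsky

theorem integral_measureReal_slice_mul_measureReal_slice {Q X : Type*} [MeasurableSpace Q]
    [MeasurableSpace X] (μ : Measure Q) (ν₁ ν₂ : Measure X) [IsFiniteMeasure μ]
    [IsFiniteMeasure ν₁] [IsFiniteMeasure ν₂] {A : Set (Q × X)} (hA : MeasurableSet A) :
    ∫ q, ν₁.real {x | (q, x) ∈ A} * ν₂.real {x | (q, x) ∈ A} ∂μ =
      ∫ p, μ.real {q | (q, p.1) ∈ A ∧ (q, p.2) ∈ A} ∂ν₁.prod ν₂ := by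
  let B : Set (Q × X × X) := {w | (w.1, w.2.1) ∈ A ∧ (w.1, w.2.2) ∈ A}
  have hB : MeasurableSet B :=
    (hA.preimage (f := fun w : Q × X × X => (w.1, w.2.1)) (by fun_prop)).inter
      (hA.preimage (f := fun w : Q × X × X => (w.1, w.2.2)) (by fun_prop))
  have hB_int : Integrable (B.indicator 1) (μ.prod (ν₁.prod ν₂)) :=
    (integrable_const (1 : ℝ)).indicator hB
  calc ∫ q, ν₁.real {x | (q, x) ∈ A} * ν₂.real {x | (q, x) ∈ A} ∂μ
      = ∫ q, ∫ p, B.indicator (1 : Q × X × X → ℝ) (q, p) ∂ν₁.prod ν₂ ∂μ := by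
        congr with q
        rw [← measureReal_prod_prod]
        exact (integral_indicator_one (measurable_prodMk_left hB)).symm
    _ = ∫ p, ∫ q, B.indicator (1 : Q × X × X → ℝ) (q, p) ∂μ ∂ν₁.prod ν₂ :=
        integral_integral_swap hB_int
    _ = ∫ p, μ.real {q | (q, p.1) ∈ A ∧ (q, p.2) ∈ A} ∂ν₁.prod ν₂ := by
        congr with p
        exact integral_indicator_one (measurable_prodMk_right hB)

section UnitVectors

variable {G : Type*} [NormedAddCommGroup G]

theorem dist_le_two_of_norm_eq_one {x y : G} (hx : ‖x‖ = 1) (hy : ‖y‖ = 1) : dist x y ≤ 2 := by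
  linarith [dist_le_norm_add_norm x y]

variable [MeasurableSpace G] {ν₁ ν₂ : Measure G}

theorem ae_prod_norm_eq_one [SFinite ν₁] [SFinite ν₂] (h₁ : ∀ᵐ x ∂ν₁, ‖x‖ = 1)
    (h₂ : ∀ᵐ x ∂ν₂, ‖x‖ = 1) : ∀ᵐ p ∂ν₁.prod ν₂, ‖p.1‖ = 1 ∧ ‖p.2‖ = 1 :=
  (Measure.quasiMeasurePreserving_fst.ae h₁).and (Measure.quasiMeasurePreserving_snd.ae h₂)

theorem integrable_dist_of_ae_norm_eq_one [OpensMeasurableSpace G] [SecondCountableTopology G]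
    [IsFiniteMeasure ν₁] [IsFiniteMeasure ν₂] (h₁ : ∀ᵐ x ∂ν₁, ‖x‖ = 1) (h₂ : ∀ᵐ x ∂ν₂, ‖x‖ = 1) :
    Integrable (fun p : G × G => dist p.1 p.2) (ν₁.prod ν₂) :=
  Integrable.of_mem_Icc 0 2 (by fun_prop) <| (ae_prod_norm_eq_one h₁ h₂).mono fun _ hp =>
    ⟨dist_nonneg, dist_le_two_of_norm_eq_one hp.1 hp.2⟩

end UnitVectors

variable {E : Type*} [NormedAddCommGroup E] [InnerProductSpace ℝ E]

theorem volume_restrict_Icc_real_setOf_le_inner {v w y : E} (hv : ‖v‖ = 1) (hw : ‖w‖ = 1)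
    (hy : ‖y‖ = 1) :
    (volume.restrict (Set.Icc (-1) 1)).real {t : ℝ | t ≤ ⟪y, v⟫ ∧ t ≤ ⟪y, w⟫} =
      1 + min ⟪y, v⟫ ⟪y, w⟫ := by
  have hv_abs := abs_le.1 (abs_real_inner_le_norm y v)
  have hw_abs := abs_le.1 (abs_real_inner_le_norm y w)
  rw [hy, hv, mul_one] at hv_abs
  rw [hy, hw, mul_one] at hw_abs
  have h_Icc : {t | t ≤ ⟪y, v⟫ ∧ t ≤ ⟪y, w⟫} ∩ Set.Icc (-1) 1 =
      Set.Icc (-1) (min ⟪y, v⟫ ⟪y, w⟫) := by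
    ext t
    simp only [Set.mem_inter_iff, Set.mem_ofPred_eq, Set.mem_Icc, le_min_iff]
    grind
  rw [measureReal_restrict_apply' measurableSet_Icc, h_Icc,
    Real.volume_real_Icc_of_le (le_min hv_abs.1 hw_abs.1)]
  ring

variable [MeasurableSpace E]

/-- The parameter measure of Stolarsky's principle: heights `t ∈ [-1, 1]` with Lebesgue measure
times cap centres with the measure `σ`. -/
def capMeasure (σ : Measure E) : Measure (ℝ × E) :=
  (volume.restrict (Set.Icc (-1) 1)).prod σ

/-- The `ν`-mass of the spherical cap with parameters `q = (t, y)`, for `ν` concentrated on the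
unit sphere. -/
def capMass (ν : Measure E) (q : ℝ × E) : ℝ :=
  ν.real {z | q.1 ≤ ⟪q.2, z⟫}

instance (σ : Measure E) [IsFiniteMeasure σ] : IsFiniteMeasure (capMeasure σ) :=
  inferInstanceAs (IsFiniteMeasure ((volume.restrict (Set.Icc (-1) 1)).prod σ))

theorem capMass_mem_Icc (ν : Measure E) [IsProbabilityMeasure ν] (q : ℝ × E) :
    capMass ν q ∈ Set.Icc 0 1 :=
  ⟨measureReal_nonneg, measureReal_le_one⟩

variable [BorelSpace E] [SecondCountableTopology E] {σ ν ν₁ ν₂ : Measure E}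

theorem measurableSet_setOf_le_inner : MeasurableSet {w : (ℝ × E) × E | w.1.1 ≤ ⟪w.1.2, w.2⟫} :=
  measurableSet_le (by fun_prop) (by fun_prop)

theorem IsUniformOnSphere.capMeasure_real_setOf_le_inner [IsProbabilityMeasure σ]
    (hσ : IsUniformOnSphere σ) {v w : E} (hv : ‖v‖ = 1) (hw : ‖w‖ = 1) :
    (capMeasure σ).real {q | q.1 ≤ ⟪q.2, v⟫ ∧ q.1 ≤ ⟪q.2, w⟫} =
      1 - stolarskyConst σ * dist v w := by
  have h_meas : MeasurableSet {q : ℝ × E | q.1 ≤ ⟪q.2, v⟫ ∧ q.1 ≤ ⟪q.2, w⟫} :=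
    (measurable_prodMk_right (y := v) measurableSet_setOf_le_inner).inter
      (measurable_prodMk_right (y := w) measurableSet_setOf_le_inner)
  calc (capMeasure σ).real {q | q.1 ≤ ⟪q.2, v⟫ ∧ q.1 ≤ ⟪q.2, w⟫}
      = ∫ y, (volume.restrict (Set.Icc (-1) 1)).real {t : ℝ | t ≤ ⟪y, v⟫ ∧ t ≤ ⟪y, w⟫} ∂σ := by
        rw [capMeasure, measureReal_def, Measure.prod_apply_symm h_meas,
          ← integral_toReal (measurable_measure_prodMk_right h_meas).aemeasurable
            (ae_of_all _ fun _ => measure_lt_top _ _)]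
        rfl
    _ = ∫ y, 1 + min ⟪y, v⟫ ⟪y, w⟫ ∂σ :=
        integral_congr_ae (hσ.ae_norm_eq_one.mono fun y hy =>
          volume_restrict_Icc_real_setOf_le_inner hv hw hy)
    _ = 1 + ∫ y, min ⟪y, v⟫ ⟪y, w⟫ ∂σ := by
        have h_int : Integrable (fun y => min ⟪y, v⟫ ⟪y, w⟫) σ :=
          (hσ.integrable_inner v).inf (hσ.integrable_inner w)
        rw [integral_add (integrable_const 1) h_int, integral_const, probReal_univ, one_smul]
    _ = 1 - stolarskyConst σ * dist v w := by
        rw [hσ.integral_min_inner, sub_eq_add_neg]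

theorem measurable_capMass (ν : Measure E) [SFinite ν] : Measurable (capMass ν) :=
  (measurable_measure_prodMk_left measurableSet_setOf_le_inner).ennreal_toReal

theorem integrable_capMass_mul_capMass (σ ν₁ ν₂ : Measure E) [IsFiniteMeasure σ]
    [IsProbabilityMeasure ν₁] [IsProbabilityMeasure ν₂] :
    Integrable (fun q => capMass ν₁ q * capMass ν₂ q) (capMeasure σ) :=
  Integrable.of_mem_Icc 0 1 ((measurable_capMass ν₁).mul (measurable_capMass ν₂)).aemeasurable <|
    ae_of_all _ fun q => unitInterval.mul_mem (capMass_mem_Icc ν₁ q) (capMass_mem_Icc ν₂ q)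

theorem integrable_capMass_sub_capMass_sq (σ ν₁ ν₂ : Measure E) [IsFiniteMeasure σ]
    [IsProbabilityMeasure ν₁] [IsProbabilityMeasure ν₂] :
    Integrable (fun q => (capMass ν₁ q - capMass ν₂ q) ^ 2) (capMeasure σ) := by
  refine Integrable.of_mem_Icc 0 1
    (((measurable_capMass ν₁).sub (measurable_capMass ν₂)).pow_const 2).aemeasurable
    (ae_of_all _ fun q => ⟨sq_nonneg _, (sq_le_one_iff_abs_le_one _).2 ?_⟩)
  have h₁ := capMass_mem_Icc ν₁ q
  have h₂ := capMass_mem_Icc ν₂ q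
  exact abs_sub_le_of_nonneg_of_le h₁.1 h₁.2 h₂.1 h₂.2

theorem IsUniformOnSphere.integral_capMass_mul_capMass [IsProbabilityMeasure σ]
    (hσ : IsUniformOnSphere σ) [IsProbabilityMeasure ν₁] [IsProbabilityMeasure ν₂]
    (h₁ : ∀ᵐ x ∂ν₁, ‖x‖ = 1) (h₂ : ∀ᵐ x ∂ν₂, ‖x‖ = 1) :
    ∫ q, capMass ν₁ q * capMass ν₂ q ∂capMeasure σ =
      1 - stolarskyConst σ * ∫ p, dist p.1 p.2 ∂ν₁.prod ν₂ :=
  calc ∫ q, capMass ν₁ q * capMass ν₂ q ∂capMeasure σ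
      = ∫ p, (capMeasure σ).real {q | q.1 ≤ ⟪q.2, p.1⟫ ∧ q.1 ≤ ⟪q.2, p.2⟫} ∂ν₁.prod ν₂ :=
        integral_measureReal_slice_mul_measureReal_slice _ ν₁ ν₂ measurableSet_setOf_le_inner
    _ = ∫ p, 1 - stolarskyConst σ * dist p.1 p.2 ∂ν₁.prod ν₂ :=
        integral_congr_ae <| (ae_prod_norm_eq_one h₁ h₂).mono fun _ hp =>
          hσ.capMeasure_real_setOf_le_inner hp.1 hp.2
    _ = 1 - stolarskyConst σ * ∫ p, dist p.1 p.2 ∂ν₁.prod ν₂ := by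
        rw [integral_sub (integrable_const 1)
          ((integrable_dist_of_ae_norm_eq_one h₁ h₂).const_mul _), integral_const_mul,
          integral_const, probReal_univ, one_smul]

theorem IsUniformOnSphere.integral_dist_prod [IsProbabilityMeasure σ] (hσ : IsUniformOnSphere σ)
    [IsProbabilityMeasure ν] (hν : ∀ᵐ x ∂ν, ‖x‖ = 1) :
    ∫ p, dist p.1 p.2 ∂ν.prod σ = ∫ p, dist p.1 p.2 ∂σ.prod σ := by
  obtain ⟨v, hv⟩ := hσ.ae_norm_eq_one.exists
  have h_const {ρ : Measure E} [IsProbabilityMeasure ρ] (hρ : ∀ᵐ x ∂ρ, ‖x‖ = 1) :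
      ∫ p, dist p.1 p.2 ∂ρ.prod σ = ∫ y, dist v y ∂σ := by
    have h_slice : ∀ᵐ x ∂ρ, ∫ y, dist x y ∂σ = ∫ y, dist v y ∂σ := hρ.mono fun x hx =>
      hσ.integral_eq_of_norm_eq (K := dist) (fun L => L.dist_map) (hx.trans hv.symm)
    rw [integral_prod _ (integrable_dist_of_ae_norm_eq_one hρ hσ.ae_norm_eq_one),
      integral_congr_ae h_slice, integral_const, probReal_univ, one_smul]
  rw [h_const hν, h_const hσ.ae_norm_eq_one]

theorem IsUniformOnSphere.integral_capMass_sub_capMass_sq [IsProbabilityMeasure σ]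
    (hσ : IsUniformOnSphere σ) [IsProbabilityMeasure ν] (hν : ∀ᵐ x ∂ν, ‖x‖ = 1) :
    ∫ q, (capMass ν q - capMass σ q) ^ 2 ∂capMeasure σ =
      stolarskyConst σ * (∫ p, dist p.1 p.2 ∂σ.prod σ - ∫ p, dist p.1 p.2 ∂ν.prod ν) := by
  have h_int_νν := integrable_capMass_mul_capMass σ ν ν
  have h_int_νσ := (integrable_capMass_mul_capMass σ ν σ).const_mul 2
  have h_int_σσ := integrable_capMass_mul_capMass σ σ σ
  have h_int_sub : Integrable
      (fun q => capMass ν q * capMass ν q - 2 * (capMass ν q * capMass σ q)) (capMeasure σ) :=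
    h_int_νν.sub h_int_νσ
  calc ∫ q, (capMass ν q - capMass σ q) ^ 2 ∂capMeasure σ
      = ∫ q, capMass ν q * capMass ν q - 2 * (capMass ν q * capMass σ q) +
          capMass σ q * capMass σ q ∂capMeasure σ := by
        congr with q
        ring
    _ = ∫ q, capMass ν q * capMass ν q ∂capMeasure σ -
          2 * ∫ q, capMass ν q * capMass σ q ∂capMeasure σ +
          ∫ q, capMass σ q * capMass σ q ∂capMeasure σ := by
        rw [integral_add h_int_sub h_int_σσ, integral_sub h_int_νν h_int_νσ,
          integral_const_mul]
    _ = stolarskyConst σ * (∫ p, dist p.1 p.2 ∂σ.prod σ - ∫ p, dist p.1 p.2 ∂ν.prod ν) := by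
        rw [hσ.integral_capMass_mul_capMass hν hν,
          hσ.integral_capMass_mul_capMass hν hσ.ae_norm_eq_one,
          hσ.integral_capMass_mul_capMass hσ.ae_norm_eq_one hσ.ae_norm_eq_one,
          hσ.integral_dist_prod hν]
        ring

end Stolarsky

section Discrepancy

/-- The empirical measure of a finite family of points: each point has mass `1 / #ι`, with
multiplicity. -/
def empiricalMeasure {ι X : Type*} [Fintype ι] [MeasurableSpace X] (x : ι → X) : Measure X :=
  (Fintype.card ι : ℝ≥0∞)⁻¹ • ∑ k, Measure.dirac (x k)

section EmpiricalMeasure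

variable {ι X : Type*} [Fintype ι] [MeasurableSpace X]

instance [Nonempty ι] (x : ι → X) : IsProbabilityMeasure (empiricalMeasure x) where
  measure_univ := by
    simp [empiricalMeasure, ENNReal.inv_mul_cancel]

theorem integral_empiricalMeasure [MeasurableSingletonClass X] (x : ι → X) (f : X → ℝ) :
    ∫ z, f z ∂empiricalMeasure x = (Fintype.card ι : ℝ)⁻¹ * ∑ k, f (x k) := by
  rw [empiricalMeasure, integral_smul_measure,
    integral_finsetSum_measure fun k _ => integrable_dirac (by simp)]
  simp

theorem empiricalMeasure_real_apply [MeasurableSingletonClass X] (x : ι → X) {s : Set X}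
    (hs : MeasurableSet s) :
    (empiricalMeasure x).real s = (Nat.card {k // x k ∈ s} : ℝ) / Fintype.card ι := by
  classical
  rw [← integral_indicator_one hs, integral_empiricalMeasure, Nat.card_eq_fintype_card,
    Fintype.card_subtype, div_eq_inv_mul]
  simp [Set.indicator]

theorem ae_empiricalMeasure {x : ι → X} {p : X → Prop} (hp : MeasurableSet {z | p z})
    (hx : ∀ k, p (x k)) : ∀ᵐ z ∂empiricalMeasure x, p z :=
  Measure.ae_smul_measure (ae_finsetSum_measure_iff.2 fun k _ => (ae_dirac_iff hp).2 (hx k)) _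

end EmpiricalMeasure

theorem integral_dist_empiricalMeasure {ι E : Type*} [Fintype ι] [DecidableEq ι]
    [NormedAddCommGroup E] [MeasurableSpace E] [OpensMeasurableSpace E]
    [SecondCountableTopology E] [Nonempty ι] {x : ι → E} (hx : ∀ k, ‖x k‖ = 1) :
    ∫ p, dist p.1 p.2 ∂(empiricalMeasure x).prod (empiricalMeasure x) =
      (∑ j, ∑ k, if j ≠ k then dist (x j) (x k) else 0) / (Fintype.card ι : ℝ) ^ 2 := by
  have h_ae : ∀ᵐ z ∂empiricalMeasure x, ‖z‖ = 1 :=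
    ae_empiricalMeasure (measurableSet_eq_fun measurable_norm measurable_const) hx
  rw [integral_prod _ (integrable_dist_of_ae_norm_eq_one h_ae h_ae)]
  simp only [integral_empiricalMeasure, ← Finset.mul_sum]
  rw [← mul_assoc, ← mul_inv, ← sq, div_eq_inv_mul]
  congr! with j _ k
  grind [dist_self]

theorem L2DiscSq_eq_integral_capMass (d N : ℕ) [NeZero N]
    (x : Fin N → EuclideanSpace ℝ (Fin (d + 1))) :
    L2DiscSq d N x =
      ∫ q, (capMass (empiricalMeasure x) q - capMass (sigmaMeasure d) q) ^ 2
        ∂capMeasure (sigmaMeasure d) := by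
  have h_count (t : ℝ) (y : EuclideanSpace ℝ (Fin (d + 1))) :
      (Nat.card {k : Fin N // t ≤ ⟪y, x k⟫} : ℝ) / N = capMass (empiricalMeasure x) (t, y) := by
    have h_cap : MeasurableSet {z | t ≤ ⟪y, z⟫} :=
      measurable_prodMk_left (x := (t, y)) measurableSet_setOf_le_inner
    rw [capMass, empiricalMeasure_real_apply x h_cap, Fintype.card_fin]
    rfl
  have h_int := integrable_capMass_sub_capMass_sq (sigmaMeasure d) (empiricalMeasure x)
    (sigmaMeasure d)
  simp only [L2DiscSq, h_count, capMeasure, integral_prod _ h_int]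
  rfl

theorem L2DiscSq_eq_stolarskyConst_mul (d N : ℕ) [NeZero N]
    {x : Fin N → EuclideanSpace ℝ (Fin (d + 1))} (hx : ∀ k, x k ∈ sphere 0 1) :
    L2DiscSq d N x = stolarskyConst (sigmaMeasure d) *
      (∫ p, dist p.1 p.2 ∂(sigmaMeasure d).prod (sigmaMeasure d) -
        (∑ j, ∑ k, if j ≠ k then dist (x j) (x k) else 0) / (N : ℝ) ^ 2) := by
  have hx_norm (k : Fin N) : ‖x k‖ = 1 := mem_sphere_zero_iff_norm.1 (hx k)
  rw [L2DiscSq_eq_integral_capMass,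
    (isUniformOnSphere_sigmaMeasure d).integral_capMass_sub_capMass_sq
      (ae_empiricalMeasure (measurableSet_eq_fun measurable_norm measurable_const) hx_norm),
    integral_dist_empiricalMeasure hx_norm, Fintype.card_fin]

theorem bddAbove_range_sum_dist (d N : ℕ) :
    BddAbove (Set.range fun x : {x : Fin N → EuclideanSpace ℝ (Fin (d + 1)) //
      ∀ k, x k ∈ sphere (0 : EuclideanSpace ℝ (Fin (d + 1))) 1} =>
      ∑ j, ∑ k, if j ≠ k then dist (x.1 j) (x.1 k) else 0) := by
  refine ⟨∑ _j : Fin N, ∑ _k : Fin N, 2, ?_⟩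
  rintro _ ⟨x, rfl⟩
  refine Finset.sum_le_sum fun j _ => Finset.sum_le_sum fun k _ => ?_
  split_ifs
  · exact dist_le_two_of_norm_eq_one (mem_sphere_zero_iff_norm.1 (x.2 j))
      (mem_sphere_zero_iff_norm.1 (x.2 k))
  · exact zero_le_two

theorem optL2Disc_eq_sqrt_stolarskyConst_mul (d N : ℕ) [NeZero N] :
    optL2Disc d N = √(stolarskyConst (sigmaMeasure d) *
      (∫ p, dist p.1 p.2 ∂(sigmaMeasure d).prod (sigmaMeasure d) -
        maxSumDist d N / (N : ℝ) ^ 2)) := by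
  let V := ∫ p, dist p.1 p.2 ∂(sigmaMeasure d).prod (sigmaMeasure d)
  let D (s : ℝ) : ℝ := √(stolarskyConst (sigmaMeasure d) * (V - s / (N : ℝ) ^ 2))
  have hD_anti : Antitone D := fun s t hst => by
    have := stolarskyConst_nonneg (sigmaMeasure d)
    dsimp only [D]
    gcongr
  have hD_cont : Continuous D := by fun_prop
  have : Nonempty {x : Fin N → EuclideanSpace ℝ (Fin (d + 1)) //
      ∀ k, x k ∈ sphere (0 : EuclideanSpace ℝ (Fin (d + 1))) 1} :=
    ⟨fun _ => EuclideanSpace.single 0 1, fun _ => by simp⟩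
  calc optL2Disc d N
      = ⨅ x : {x : Fin N → EuclideanSpace ℝ (Fin (d + 1)) //
          ∀ k, x k ∈ sphere (0 : EuclideanSpace ℝ (Fin (d + 1))) 1},
          D (∑ j, ∑ k, if j ≠ k then dist (x.1 j) (x.1 k) else 0) :=
        iInf_congr fun x => congrArg sqrt (L2DiscSq_eq_stolarskyConst_mul d N x.2)
    _ = D (maxSumDist d N) :=
        (hD_anti.map_ciSup_of_continuousAt hD_cont.continuousAt
          (bddAbove_range_sum_dist d N)).symm

theorem rpow_mul_optL2Disc_eq_sqrt (d N : ℕ) [NeZero N] (c α : ℝ) :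
    (N : ℝ) ^ (1 - α / 2) * optL2Disc d N = √(stolarskyConst (sigmaMeasure d) *
      (c - (maxSumDist d N -
        ((∫ p, dist p.1 p.2 ∂(sigmaMeasure d).prod (sigmaMeasure d)) * (N : ℝ) ^ 2 -
          c * (N : ℝ) ^ α)) / (N : ℝ) ^ α)) := by
  have hN : (0 : ℝ) < N := Nat.cast_pos.2 (NeZero.pos N)
  have h_sq : ((N : ℝ) ^ (1 - α / 2)) ^ 2 = (N : ℝ) ^ 2 / (N : ℝ) ^ α := by
    rw [← rpow_natCast, ← rpow_mul hN.le, ← rpow_natCast _ 2, ← rpow_sub hN]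
    congr 1
    push_cast
    ring
  rw [optL2Disc_eq_sqrt_stolarskyConst_mul, ← sqrt_sq (rpow_nonneg hN.le (1 - α / 2)),
    ← sqrt_mul (sq_nonneg _), h_sq]
  congr 1
  field_simp
  ring

theorem optL2Disc_tendsto_of_energy_asymptotics_general (d : ℕ) (c α : ℝ)
    (hE : (fun N : ℕ => maxSumDist d N -
        ((∫ p : EuclideanSpace ℝ (Fin (d + 1)) × EuclideanSpace ℝ (Fin (d + 1)),
            dist p.1 p.2 ∂ (sigmaMeasure d).prod (sigmaMeasure d)) * (N : ℝ) ^ 2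
          - c * (N : ℝ) ^ α))
        =o[atTop] fun N : ℕ => (N : ℝ) ^ α) :
    Tendsto (fun N : ℕ => (N : ℝ) ^ (1 - α / 2) * optL2Disc d N) atTop
      (𝓝 (Real.sqrt (c *
        (μH[(d : ℝ)] (closedBall (0 : EuclideanSpace ℝ (Fin d)) 1)).toReal /
        (μH[(d : ℝ)] (sphere (0 : EuclideanSpace ℝ (Fin (d + 1))) 1)).toReal))) := by
  have h_const : c * (μH[(d : ℝ)] (closedBall (0 : EuclideanSpace ℝ (Fin d)) 1)).toReal /
      (μH[(d : ℝ)] (sphere (0 : EuclideanSpace ℝ (Fin (d + 1))) 1)).toReal =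
      stolarskyConst (sigmaMeasure d) * (c - 0) := by
    rw [stolarskyConst_sigmaMeasure]
    ring
  rw [h_const]
  refine ((hE.tendsto_div_nhds_zero.const_sub c).const_mul _).sqrt.congr'
    ((eventually_ne_atTop 0).mono fun N hN => ?_)
  have : NeZero N := ⟨hN⟩
  exact (rpow_mul_optL2Disc_eq_sqrt d N c α).symm

end Discrepancy

/-- If the maximal sum of distances on `S^d` satisfies
`E_{−1}(S^d; N) = V·N² − c·N^{1−1/d} + o(N^{1−1/d})`, where `V` is the distance integral
and `c > 0`, then `N^{1/2+1/(2d)} · D_{L2,C}(S^d; N) → sqrt(c · H_d(B^d)/H_d(S^d))`. -/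
theorem optL2Disc_tendsto_of_energy_asymptotics (d : ℕ) (hd : 2 ≤ d) (c : ℝ) (hc : 0 < c)
    (hE : (fun N : ℕ => maxSumDist d N -
        ((∫ p : EuclideanSpace ℝ (Fin (d + 1)) × EuclideanSpace ℝ (Fin (d + 1)),
            dist p.1 p.2 ∂ (sigmaMeasure d).prod (sigmaMeasure d)) * (N : ℝ) ^ 2
          - c * (N : ℝ) ^ ((1 : ℝ) - 1 / d)))
        =o[atTop] fun N : ℕ => (N : ℝ) ^ ((1 : ℝ) - 1 / d)) :
    Tendsto (fun N : ℕ => (N : ℝ) ^ ((1 : ℝ) / 2 + 1 / (2 * d)) * optL2Disc d N) atTop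
      (𝓝 (Real.sqrt (c *
        (μH[(d : ℝ)] (closedBall (0 : EuclideanSpace ℝ (Fin d)) 1)).toReal /
        (μH[(d : ℝ)] (sphere (0 : EuclideanSpace ℝ (Fin (d + 1))) 1)).toReal))) := by
  rw [show (1 : ℝ) / 2 + 1 / (2 * d) = 1 - (1 - 1 / d) / 2 by ring]
  exact optL2Disc_tendsto_of_energy_asymptotics_general d c _ hE
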